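/- Let (A,a₀), (A',a₀') and (X,x₀) be pointed topological spaces, f : A → X a pointed continuous map, and g : A' → A a pointed homotopy equivalence (there is a pointed continuous g' : A → A' with g∘g' and g'∘g homotopic to the respective identities through pointed homotopies). Let m ≥ 1 and let α : S^m → X be continuous with α(s₀)=x₀. Then α admits a homotopy-Gottlieb extension for f if and only if α admits a homotopy-Gottlieb extension for f∘g. -/

import Mathlib

universe u v

open Metric unitInterval

attribute [local instance] Path.Homotopic.setoid
/-- `α : S → X` admits a homotopy-Gottlieb extension for `f : A → X`: a continuous
`F : A × S → X` such that `a ↦ F(a,s₀)` is pointed-homotopic to `f` and `s ↦ F(a₀,s)` is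
pointed-homotopic to `α`. -/
def HasHtpyGottliebExtS {A X S : Type*} [TopologicalSpace A] [TopologicalSpace X]
    [TopologicalSpace S] (a₀ : A) (s₀ : S) (f : C(A, X)) (α : C(S, X)) : Prop :=
  ∃ F : C(A × S, X),
    (F.comp ((ContinuousMap.id A).prodMk (ContinuousMap.const A s₀))).HomotopicRel f {a₀} ∧
    (F.comp ((ContinuousMap.const S a₀).prodMk (ContinuousMap.id S))).HomotopicRel α {s₀}
theorem HasHtpyGottliebExtS.precomp {A B X S : Type*} [TopologicalSpace A] [TopologicalSpace B]
    [TopologicalSpace X] [TopologicalSpace S] {a₀ : A} {b₀ : B} {s₀ : S} {f : C(A, X)}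
    {α : C(S, X)} (h : HasHtpyGottliebExtS a₀ s₀ f α) (k : C(B, A)) (hk : k b₀ = a₀) :
    HasHtpyGottliebExtS b₀ s₀ (f.comp k) α := by
  obtain ⟨F, ⟨H⟩, h2⟩ := h
  refine ⟨F.comp (k.prodMap (ContinuousMap.id S)), ⟨⟨⟨⟨fun p => H (p.1, k p.2), by fun_prop⟩,
    fun b => ?_, fun b => ?_⟩, fun t b hb => ?_⟩⟩, ?_⟩
  · simp
  · simp
  · obtain rfl : b = b₀ := hb
    have := H.eq_fst t (x := k b) (by simp [hk])
    simpa using this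
  · subst hk
    exact h2

/-- Invariance under pointed homotopy equivalence: if `g : A' → A` is a pointed homotopy
equivalence, then `α` admits a homotopy-Gottlieb extension for `f` iff it admits one for
`f ∘ g`. -/
theorem statement15 {A A' X : Type u} [TopologicalSpace A] [TopologicalSpace A']
    [TopologicalSpace X] (a₀ : A) (a₀' : A') (x₀ : X)
    (f : C(A, X)) (hf : f a₀ = x₀)
    (g : C(A', A)) (hg : g a₀' = a₀) (g' : C(A, A')) (hg' : g' a₀ = a₀')
    (hgg' : (g.comp g').HomotopicRel (ContinuousMap.id A) {a₀})
    (hg'g : (g'.comp g).HomotopicRel (ContinuousMap.id A') {a₀'})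
    (m : ℕ) (hm : 1 ≤ m)
    (s₀ : sphere (0 : EuclideanSpace ℝ (Fin (m + 1))) 1)
    (α : C(sphere (0 : EuclideanSpace ℝ (Fin (m + 1))) 1, X)) (hα : α s₀ = x₀) :
    HasHtpyGottliebExtS a₀ s₀ f α ↔ HasHtpyGottliebExtS a₀' s₀ (f.comp g) α := by
  refine ⟨fun h => h.precomp g hg, fun h => ?_⟩
  obtain ⟨F, h1, h2⟩ := h.precomp g' hg'
  refine ⟨F, h1.trans ?_, h2⟩
  obtain ⟨K⟩ := hgg'
  refine ⟨⟨⟨⟨fun p => f (K p), by fun_prop⟩, fun b => ?_, fun b => ?_⟩, fun t b hb => ?_⟩⟩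
  · simp
  · simp
  · have := K.eq_fst t hb
    exact congrArg f this
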